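/- Let ε, η ∈ ℓ²(ℕ; 𝓗) be nonzero, and set ρ_ε = γ_ε / ‖ε‖² and ρ_η = γ_η / ‖η‖², where γ_ε = ∑_k ε_k ⊗ ε̄_k and γ_η = ∑_k η_k ⊗ η̄_k. Then ‖ρ_ε − ρ_η‖₂ ≤ 2 ‖ε − η‖ (‖ε‖ + ‖η‖) / ‖ε‖², and consequently ‖ρ_ε − ρ_η‖₂ ≤ 4 ‖ε − η‖ / ‖ε‖ + 2 ‖ε − η‖² / ‖ε‖². -/

import Mathlib

open scoped InnerProductSpace

/-- The rank-one operator `x ⊗ ȳ : z ↦ ⟪y, z⟫ x` on a complex Hilbert space. -/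
noncomputable def rankOne {H : Type*} [NormedAddCommGroup H] [InnerProductSpace ℂ H]
    (x y : H) : H →L[ℂ] H :=
  (innerSL ℂ y).smulRight x

/-- The Hilbert–Schmidt norm `‖T‖₂ = (∑ᵢ ‖T eᵢ‖²)^{1/2}` of an operator `T`,
computed with respect to a Hilbert basis `e`. -/
noncomputable def hsNorm {H : Type*} [NormedAddCommGroup H] [InnerProductSpace ℂ H]
    {ι : Type*} (e : HilbertBasis ι ℂ H) (T : H →L[ℂ] H) : ℝ :=
  Real.sqrt (∑' i, ‖T (e i)‖ ^ 2)

/-!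
Identify a Hilbert–Schmidt operator `T` with the square-summable family `(T eᵢ)`, so that `‖·‖₂`
is an `ℓ²` norm. Polarisation gives
`2 (x ⊗ x̄ - y ⊗ ȳ) = (x + y) ⊗ (x - y)‾ + (x - y) ⊗ (x + y)‾`; summing over `k` and applying the
Cauchy–Schwarz inequality yields `‖γ_ε - γ_η‖₂ ≤ ‖ε - η‖ ‖ε + η‖`. The same quantity bounds
`|‖ε‖² - ‖η‖²|`. Since `‖γ_η‖₂ ≤ ‖η‖²`, the splitting
`ρ_ε - ρ_η = (γ_ε - γ_η) / ‖ε‖² + (1 / ‖ε‖² - 1 / ‖η‖²) γ_η` therefore has two terms of norm at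
most `‖ε - η‖ ‖ε + η‖ / ‖ε‖²`.
-/

lemma abs_norm_sq_sub_norm_sq_le (𝕜 : Type*) {E : Type*} [RCLike 𝕜] [SeminormedAddCommGroup E]
    [InnerProductSpace 𝕜 E] (x y : E) : |‖x‖ ^ 2 - ‖y‖ ^ 2| ≤ ‖x - y‖ * ‖x + y‖ := by
  have h_inner : RCLike.re ⟪x - y, x + y⟫_𝕜 = ‖x‖ ^ 2 - ‖y‖ ^ 2 := by
    simp only [inner_sub_left, inner_add_right, map_sub, map_add, inner_self_eq_norm_sq,
      inner_re_symm (𝕜 := 𝕜) y x]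
    ring
  rw [← h_inner]
  exact (RCLike.abs_re_le_norm _).trans (norm_inner_le_norm _ _)

lemma hasSum_norm_inner_sq {𝕜 E ι : Type*} [RCLike 𝕜] [NormedAddCommGroup E]
    [InnerProductSpace 𝕜 E] (e : HilbertBasis ι 𝕜 E) (y : E) :
    HasSum (fun i => ‖⟪y, e i⟫_𝕜‖ ^ 2) (‖y‖ ^ 2) := by
  simpa [e.repr_apply_apply, norm_inner_symm] using
    lp.hasSum_norm (p := 2) (by norm_num) (e.repr y)

lemma lp_two_summable_norm_mul_norm_and_tsum_le {κ : Type*} {E : κ → Type*}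
    [∀ k, NormedAddCommGroup (E k)] (a b : lp E 2) :
    (Summable fun k => ‖a k‖ * ‖b k‖) ∧ ∑' k, ‖a k‖ * ‖b k‖ ≤ ‖a‖ * ‖b‖ :=
  lp.tsum_mul_le_mul_norm (by simpa using Real.HolderConjugate.two_two) a b

section HilbertSchmidt

variable {H : Type*} [NormedAddCommGroup H] [InnerProductSpace ℂ H] {ι : Type*}
  {e : HilbertBasis ι ℂ H} {S T : H →L[ℂ] H}

/-- `T` is a Hilbert–Schmidt operator: the family `(T eᵢ)` is square-summable. The Hilbert basis
is kept explicit because `hsNorm` is computed in it; for other operators `hsNorm` has the junk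
value `0`. -/
def IsHilbertSchmidt (e : HilbertBasis ι ℂ H) (T : H →L[ℂ] H) : Prop :=
  Memℓp (fun i => T (e i)) 2

namespace IsHilbertSchmidt

/-- The family `(T eᵢ)` as a vector of `ℓ²(ι; H)`; this embeds the Hilbert–Schmidt operators
isometrically, so that the norm axioms for `hsNorm` can be read off from `ℓ²`. -/
noncomputable def toLp (hT : IsHilbertSchmidt e T) : lp (fun _ : ι => H) 2 :=
  ⟨fun i => T (e i), hT⟩

lemma norm_toLp (hT : IsHilbertSchmidt e T) : ‖hT.toLp‖ = hsNorm e T := by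
  rw [lp.norm_eq_tsum_rpow (by norm_num), hsNorm, Real.sqrt_eq_rpow]
  simp [toLp]

lemma add (hS : IsHilbertSchmidt e S) (hT : IsHilbertSchmidt e T) : IsHilbertSchmidt e (S + T) :=
  Memℓp.add hS hT

lemma sub (hS : IsHilbertSchmidt e S) (hT : IsHilbertSchmidt e T) : IsHilbertSchmidt e (S - T) :=
  Memℓp.sub hS hT

lemma hsNorm_add_le (hS : IsHilbertSchmidt e S) (hT : IsHilbertSchmidt e T) :
    hsNorm e (S + T) ≤ hsNorm e S + hsNorm e T := by
  rw [← (hS.add hT).norm_toLp, ← hS.norm_toLp, ← hT.norm_toLp]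
  exact norm_add_le hS.toLp hT.toLp

section Smul

variable {𝕜 : Type*} [NormedField 𝕜] [NormedSpace 𝕜 H] [SMulCommClass ℂ 𝕜 H]

lemma const_smul (hT : IsHilbertSchmidt e T) (c : 𝕜) : IsHilbertSchmidt e (c • T) :=
  Memℓp.const_smul hT c

lemma hsNorm_const_smul (hT : IsHilbertSchmidt e T) (c : 𝕜) :
    hsNorm e (c • T) = ‖c‖ * hsNorm e T := by
  rw [← (hT.const_smul c).norm_toLp, ← hT.norm_toLp]
  exact norm_smul c hT.toLp

end Smul

lemma of_hasSum_and_hsNorm_le_tsum {κ : Type*} {T : κ → H →L[ℂ] H} {g : κ → ℝ}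
    (hT : ∀ k, IsHilbertSchmidt e (T k)) (hTg : ∀ k, hsNorm e (T k) ≤ g k) (hg : Summable g)
    (hS : HasSum T S) : IsHilbertSchmidt e S ∧ hsNorm e S ≤ ∑' k, g k := by
  let partialSum (s : Finset κ) : lp (fun _ : ι => H) 2 := ∑ k ∈ s, (hT k).toLp
  have norm_partialSum_le (s : Finset κ) : ‖partialSum s‖ ≤ ∑' k, g k :=
    calc ‖partialSum s‖ ≤ ∑ k ∈ s, g k :=
          norm_sum_le_of_le s fun k _ => (hT k).norm_toLp.trans_le (hTg k)
      _ ≤ ∑' k, g k := hg.sum_le_tsum s fun k _ => (Real.sqrt_nonneg _).trans (hTg k)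
  have tendsto_partialSum :
      Filter.Tendsto (fun s i => partialSum s i) Filter.atTop (nhds fun i => S (e i)) := by
    refine tendsto_pi_nhds.2 fun i => ?_
    have h_apply : HasSum (fun k => T k (e i)) (S (e i)) :=
      hS.mapL (ContinuousLinearMap.apply ℂ H (e i))
    simpa only [HasSum, SummationFilter.unconditional_filter, partialSum, lp.coeFn_sum,
      Finset.sum_apply, toLp] using h_apply
  have hS' : IsHilbertSchmidt e S :=
    lp.memℓp_of_tendsto
      (isBounded_iff_forall_norm_le.2 ⟨_, Set.forall_mem_range.2 norm_partialSum_le⟩)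
      tendsto_partialSum
  exact ⟨hS', hS'.norm_toLp ▸ lp.norm_le_of_tendsto
    (Filter.Eventually.of_forall norm_partialSum_le) (f := hS'.toLp) tendsto_partialSum⟩

lemma hsNorm_inv_smul_sub_inv_smul_le (hS : IsHilbertSchmidt e S) (hT : IsHilbertSchmidt e T)
    {a b : ℝ} (ha : 0 < a) (hb : 0 < b) (hTb : hsNorm e T ≤ b) :
    hsNorm e (a⁻¹ • S - b⁻¹ • T) ≤ (hsNorm e (S - T) + |a - b|) / a := by
  have h_split : a⁻¹ • S - b⁻¹ • T = a⁻¹ • (S - T) + (a⁻¹ - b⁻¹) • T := by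
    rw [smul_sub, sub_smul]
    abel
  have h_scalar : |a⁻¹ - b⁻¹| * b = |a - b| / a := by
    rw [inv_sub_inv ha.ne' hb.ne', abs_div, abs_mul, abs_of_pos ha, abs_of_pos hb, abs_sub_comm]
    field_simp
  calc hsNorm e (a⁻¹ • S - b⁻¹ • T)
      ≤ hsNorm e (a⁻¹ • (S - T)) + hsNorm e ((a⁻¹ - b⁻¹) • T) := by
        rw [h_split]
        exact ((hS.sub hT).const_smul _).hsNorm_add_le (hT.const_smul _)
    _ = a⁻¹ * hsNorm e (S - T) + |a⁻¹ - b⁻¹| * hsNorm e T := by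
        rw [(hS.sub hT).hsNorm_const_smul, hT.hsNorm_const_smul, Real.norm_eq_abs,
          Real.norm_eq_abs, abs_of_pos (inv_pos.2 ha)]
    _ ≤ a⁻¹ * hsNorm e (S - T) + |a⁻¹ - b⁻¹| * b := by gcongr
    _ = (hsNorm e (S - T) + |a - b|) / a := by
        rw [h_scalar]
        ring

end IsHilbertSchmidt

lemma rankOne_self_sub_rankOne_self (x y : H) :
    rankOne x x - rankOne y y =
      (2⁻¹ : ℝ) • (rankOne (x + y) (x - y) + rankOne (x - y) (x + y)) := by
  have h_two : (2 : ℝ) • (rankOne x x - rankOne y y) =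
      rankOne (x + y) (x - y) + rankOne (x - y) (x + y) := by
    ext z
    simp only [rankOne, two_smul, add_apply, sub_apply, ContinuousLinearMap.smulRight_apply,
      innerSL_apply_apply, inner_add_left, inner_sub_left]
    module
  rw [← h_two, inv_smul_smul₀ two_ne_zero]

variable (e)

lemma hasSum_norm_rankOne_apply_sq (x y : H) :
    HasSum (fun i => ‖rankOne x y (e i)‖ ^ 2) ((‖x‖ * ‖y‖) ^ 2) := by
  simpa [rankOne, norm_smul, mul_pow, mul_comm] using
    (hasSum_norm_inner_sq e y).mul_right (‖x‖ ^ 2)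

lemma isHilbertSchmidt_rankOne (x y : H) : IsHilbertSchmidt e (rankOne x y) :=
  memℓp_gen (by simpa using (hasSum_norm_rankOne_apply_sq e x y).summable)

lemma hsNorm_rankOne (x y : H) : hsNorm e (rankOne x y) = ‖x‖ * ‖y‖ := by
  rw [hsNorm, (hasSum_norm_rankOne_apply_sq e x y).tsum_eq, Real.sqrt_sq (by positivity)]

lemma hsNorm_rankOne_self_sub_rankOne_self_le (x y : H) :
    hsNorm e (rankOne x x - rankOne y y) ≤ ‖x - y‖ * ‖x + y‖ := by
  have h_add := isHilbertSchmidt_rankOne e (x + y) (x - y)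
  have h_sub := isHilbertSchmidt_rankOne e (x - y) (x + y)
  rw [rankOne_self_sub_rankOne_self, (h_add.add h_sub).hsNorm_const_smul]
  calc ‖(2⁻¹ : ℝ)‖ * hsNorm e (rankOne (x + y) (x - y) + rankOne (x - y) (x + y))
      ≤ ‖(2⁻¹ : ℝ)‖ * (‖x + y‖ * ‖x - y‖ + ‖x - y‖ * ‖x + y‖) := by
        gcongr
        simpa only [hsNorm_rankOne] using h_add.hsNorm_add_le h_sub
    _ = ‖x - y‖ * ‖x + y‖ := by
        rw [Real.norm_of_nonneg (by norm_num)]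
        ring

section Density

variable {e} {κ : Type*} {ε η : lp (fun _ : κ => H) 2} {γε γη : H →L[ℂ] H}

lemma isHilbertSchmidt_and_hsNorm_le_of_hasSum_rankOne {a b : lp (fun _ : κ => H) 2}
    (hT : HasSum (fun k => rankOne (a k) (b k)) T) :
    IsHilbertSchmidt e T ∧ hsNorm e T ≤ ‖a‖ * ‖b‖ := by
  obtain ⟨h_summable, h_le⟩ := lp_two_summable_norm_mul_norm_and_tsum_le a b
  obtain ⟨hT_hs, hT_le⟩ := IsHilbertSchmidt.of_hasSum_and_hsNorm_le_tsum
    (fun _ => isHilbertSchmidt_rankOne e _ _) (fun _ => (hsNorm_rankOne e _ _).le) h_summable hT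
  exact ⟨hT_hs, hT_le.trans h_le⟩

lemma hsNorm_sub_le_of_hasSum_rankOne_self
    (hγε : HasSum (fun k => rankOne (ε k) (ε k)) γε)
    (hγη : HasSum (fun k => rankOne (η k) (η k)) γη) :
    hsNorm e (γε - γη) ≤ ‖ε - η‖ * ‖ε + η‖ := by
  obtain ⟨h_summable, h_le⟩ := lp_two_summable_norm_mul_norm_and_tsum_le (ε - η) (ε + η)
  exact (IsHilbertSchmidt.of_hasSum_and_hsNorm_le_tsum
    (fun _ => (isHilbertSchmidt_rankOne e _ _).sub (isHilbertSchmidt_rankOne e _ _))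
    (fun k => hsNorm_rankOne_self_sub_rankOne_self_le e (ε k) (η k))
    h_summable (hγε.sub hγη)).2.trans h_le

lemma hsNorm_normalised_density_diff_le_mul_norm_add (hε : ε ≠ 0) (hη : η ≠ 0)
    (hγε : HasSum (fun k => rankOne (ε k) (ε k)) γε)
    (hγη : HasSum (fun k => rankOne (η k) (η k)) γη) :
    hsNorm e ((‖ε‖ ^ 2)⁻¹ • γε - (‖η‖ ^ 2)⁻¹ • γη) ≤
      2 * ‖ε - η‖ * ‖ε + η‖ / ‖ε‖ ^ 2 := by
  have hε_pos : 0 < ‖ε‖ ^ 2 := pow_pos (norm_pos_iff.2 hε) 2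
  have hη_pos : 0 < ‖η‖ ^ 2 := pow_pos (norm_pos_iff.2 hη) 2
  obtain ⟨hγε_hs, -⟩ := isHilbertSchmidt_and_hsNorm_le_of_hasSum_rankOne (e := e) hγε
  obtain ⟨hγη_hs, hγη_le⟩ := isHilbertSchmidt_and_hsNorm_le_of_hasSum_rankOne (e := e) hγη
  calc hsNorm e ((‖ε‖ ^ 2)⁻¹ • γε - (‖η‖ ^ 2)⁻¹ • γη)
      ≤ (hsNorm e (γε - γη) + |‖ε‖ ^ 2 - ‖η‖ ^ 2|) / ‖ε‖ ^ 2 :=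
        hγε_hs.hsNorm_inv_smul_sub_inv_smul_le hγη_hs hε_pos hη_pos (hγη_le.trans_eq (sq _).symm)
    _ ≤ (‖ε - η‖ * ‖ε + η‖ + ‖ε - η‖ * ‖ε + η‖) / ‖ε‖ ^ 2 := by
        gcongr
        · exact hsNorm_sub_le_of_hasSum_rankOne_self hγε hγη
        · exact abs_norm_sq_sub_norm_sq_le ℂ ε η
    _ = 2 * ‖ε - η‖ * ‖ε + η‖ / ‖ε‖ ^ 2 := by ring

end Density

end HilbertSchmidt

theorem hsNorm_normalised_density_diff_le_general {H : Type*} [NormedAddCommGroup H]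
    [InnerProductSpace ℂ H] {ι κ : Type*} (e : HilbertBasis ι ℂ H)
    (ε η : lp (fun _ : κ => H) 2) (hε : ε ≠ 0) (hη : η ≠ 0)
    (γε γη : H →L[ℂ] H)
    (hγε : HasSum (fun k => rankOne (ε k) (ε k)) γε)
    (hγη : HasSum (fun k => rankOne (η k) (η k)) γη) :
    hsNorm e ((‖ε‖ ^ 2)⁻¹ • γε - (‖η‖ ^ 2)⁻¹ • γη) ≤
        2 * ‖ε - η‖ * (‖ε‖ + ‖η‖) / ‖ε‖ ^ 2 ∧
    hsNorm e ((‖ε‖ ^ 2)⁻¹ • γε - (‖η‖ ^ 2)⁻¹ • γη) ≤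
        4 * ‖ε - η‖ / ‖ε‖ + 2 * ‖ε - η‖ ^ 2 / ‖ε‖ ^ 2 := by
  have h_first : hsNorm e ((‖ε‖ ^ 2)⁻¹ • γε - (‖η‖ ^ 2)⁻¹ • γη) ≤
      2 * ‖ε - η‖ * (‖ε‖ + ‖η‖) / ‖ε‖ ^ 2 :=
    (hsNorm_normalised_density_diff_le_mul_norm_add hε hη hγε hγη).trans
      (by gcongr; exact norm_add_le ε η)
  refine ⟨h_first, h_first.trans ?_⟩
  calc 2 * ‖ε - η‖ * (‖ε‖ + ‖η‖) / ‖ε‖ ^ 2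
      ≤ 2 * ‖ε - η‖ * (‖ε‖ + (‖ε‖ + ‖ε - η‖)) / ‖ε‖ ^ 2 := by
        gcongr
        exact norm_le_norm_add_norm_sub ε η
    _ = 4 * ‖ε - η‖ / ‖ε‖ + 2 * ‖ε - η‖ ^ 2 / ‖ε‖ ^ 2 := by
        field_simp [norm_ne_zero_iff.2 hε]
        ring

/-- **Hilbert–Schmidt estimate for differences of normalised density operators.**
For nonzero `ε, η ∈ ℓ²(ℕ; 𝓗)`, with `γ_ε = ∑_k ε_k ⊗ ε̄_k`,
`γ_η = ∑_k η_k ⊗ η̄_k` and the normalised operators `ρ_ε = γ_ε/‖ε‖²`,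
`ρ_η = γ_η/‖η‖²`, one has
`‖ρ_ε − ρ_η‖₂ ≤ 2‖ε − η‖(‖ε‖ + ‖η‖)/‖ε‖²` and consequently
`‖ρ_ε − ρ_η‖₂ ≤ 4‖ε − η‖/‖ε‖ + 2‖ε − η‖²/‖ε‖²`. -/
theorem hsNorm_normalised_density_diff_le {H : Type*} [NormedAddCommGroup H]
    [InnerProductSpace ℂ H] [CompleteSpace H] {ι : Type*} (e : HilbertBasis ι ℂ H)
    (ε η : lp (fun _ : ℕ => H) 2) (hε : ε ≠ 0) (hη : η ≠ 0)
    (γε γη : H →L[ℂ] H)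
    (hγε : HasSum (fun k => rankOne (ε k) (ε k)) γε)
    (hγη : HasSum (fun k => rankOne (η k) (η k)) γη) :
    hsNorm e ((‖ε‖ ^ 2)⁻¹ • γε - (‖η‖ ^ 2)⁻¹ • γη) ≤
        2 * ‖ε - η‖ * (‖ε‖ + ‖η‖) / ‖ε‖ ^ 2 ∧
    hsNorm e ((‖ε‖ ^ 2)⁻¹ • γε - (‖η‖ ^ 2)⁻¹ • γη) ≤
        4 * ‖ε - η‖ / ‖ε‖ + 2 * ‖ε - η‖ ^ 2 / ‖ε‖ ^ 2 :=
  hsNorm_normalised_density_diff_le_general e ε η hε hη γε γη hγε hγη
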